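/- Let X be a finite set with |X| = n ≥ 3. Then the generalized Desargues configuration G(X,2) has exactly 2^{n−1} − 1 hyperplanes. -/

import Mathlib

/-!
A point of `G(X,2)` is an edge of the complete graph on `X` and a line is a triangle, so a set `H`
of edges is a subspace meeting every line iff every triangle has exactly one or three of its edges
in `H` (`isHyperplane_iff`). Equivalently, "equal or joined by an edge of `H`" is an equivalence
relation on `X` with at most two classes, i.e. `H = ℘₂(A) ∪ ℘₂(X \ A)` for some `A ⊆ X`. Fixing a
base point `x₀ ∈ X` and requiring `x₀ ∉ A` makes `A` unique, since `A` consists of the points not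
joined to `x₀` in `H`. Properness of `H` means `A ≠ ∅`, so the hyperplanes are in bijection with the
nonempty subsets of `X \ {x₀}`.
-/

/-- An incidence structure: a set of points and a family of lines (subsets of points). -/
structure IncStruct (α : Type*) where
  pts : Set α
  lines : Set (Set α)

/-- A partial Steiner triple system: finitely many points, every line is a 3-element
subset of the point set, and two distinct points lie on at most one common line. -/
def IsPSTS {α : Type*} (M : IncStruct α) : Prop :=
  M.pts.Finite ∧
  (∀ L ∈ M.lines, L ⊆ M.pts ∧ L.ncard = 3) ∧
  (∀ L₁ ∈ M.lines, ∀ L₂ ∈ M.lines, ∀ x y : α,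
    x ≠ y → x ∈ L₁ → y ∈ L₁ → x ∈ L₂ → y ∈ L₂ → L₁ = L₂)

/-- A subspace: every line having two distinct points in `Y` is contained in `Y`. -/
def IsSubspace {α : Type*} (M : IncStruct α) (Y : Set α) : Prop :=
  Y ⊆ M.pts ∧ ∀ L ∈ M.lines, ∀ x ∈ L ∩ Y, ∀ y ∈ L ∩ Y, x ≠ y → L ⊆ Y

/-- A hyperplane: a proper subspace meeting every line. -/
def IsHyperplane {α : Type*} (M : IncStruct α) (Y : Set α) : Prop :=
  IsSubspace M Y ∧ Y ≠ M.pts ∧ ∀ L ∈ M.lines, (L ∩ Y).Nonempty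

/-- `Y₁ ⋔ Y₂` relative to the ambient set `S`. -/
def hcap {α : Type*} (S Y₁ Y₂ : Set α) : Set α :=
  (Y₁ ∩ Y₂) ∪ ((S \ Y₁) ∩ (S \ Y₂))

/-- `℘₂(Z)`: the family of 2-element subsets of `Z`. -/
def pairs {α : Type*} (Z : Set α) : Set (Set α) :=
  {e | e ⊆ Z ∧ e.ncard = 2}

/-- `H(A | B) = ℘₂(A) ∪ ℘₂(B)`. -/
def Hgt {α : Type*} (A B : Set α) : Set (Set α) := pairs A ∪ pairs B

/-- A `B(N)`-configuration (`N = n + c`): a PSTS with `C(N,2)` points, `C(N,3)` lines,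
and each point on exactly `N - 2` lines. -/
def IsBConfig {α : Type*} (M : IncStruct α) (N : ℕ) : Prop :=
  IsPSTS M ∧ M.pts.ncard = N.choose 2 ∧ M.lines.ncard = N.choose 3 ∧
  ∀ p ∈ M.pts, {L | L ∈ M.lines ∧ p ∈ L}.ncard = N - 2

/-- `M` freely contains the complete graph `K_X`. -/
def FreelyContains {α : Type*} (M : IncStruct α) (X : Set α) : Prop :=
  X ⊆ M.pts ∧
  (∀ x ∈ X, ∀ y ∈ X, x ≠ y → ∃ L ∈ M.lines, x ∈ L ∧ y ∈ L) ∧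
  (∀ L ∈ M.lines, ∀ x ∈ L ∩ X, ∀ y ∈ L ∩ X, ∀ z ∈ L ∩ X, x = y ∨ y = z ∨ x = z) ∧
  (∀ L₁ ∈ M.lines, ∀ L₂ ∈ M.lines, ∀ a₁ ∈ X, ∀ a₂ ∈ X, ∀ b₁ ∈ X, ∀ b₂ ∈ X,
    a₁ ≠ a₂ → b₁ ≠ b₂ → ({a₁, a₂} : Set α) ∩ {b₁, b₂} = ∅ →
    a₁ ∈ L₁ → a₂ ∈ L₁ → b₁ ∈ L₂ → b₂ ∈ L₂ → L₁ ∩ L₂ = ∅)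

/-- Restriction of an incidence structure to a set `D` of points. -/
def restr {α : Type*} (M : IncStruct α) (D : Set α) : IncStruct α :=
  ⟨D, {L | L ∈ M.lines ∧ L ⊆ D}⟩

/-- Isomorphism of incidence structures: a bijection between the point sets
mapping the lines of one structure exactly onto the lines of the other. -/
def IsIso {α β : Type*} (M : IncStruct α) (N : IncStruct β) : Prop :=
  ∃ φ : α → β, Set.BijOn φ M.pts N.pts ∧ (fun L => φ '' L) '' M.lines = N.lines

/-- The generalized Desargues configuration `G(X,2)`. -/
def Gdes {α : Type*} (X : Set α) : IncStruct (Set α) :=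
  ⟨pairs X, {L | ∃ Z ⊆ X, Z.ncard = 3 ∧ L = pairs Z}⟩

theorem pair_mem_pairs {α : Type*} {Z : Set α} {x y : α} (h : x ≠ y) :
    ({x, y} : Set α) ∈ pairs Z ↔ x ∈ Z ∧ y ∈ Z := by
  simp [pairs, Set.ncard_pair h, Set.insert_subset_iff]

theorem mem_pairs_iff {α : Type*} {Z e : Set α} :
    e ∈ pairs Z ↔ ∃ x ∈ Z, ∃ y ∈ Z, x ≠ y ∧ e = {x, y} := by
  constructor
  · rintro ⟨h1, h2⟩
    obtain ⟨x, y, hxy, rfl⟩ := Set.ncard_eq_two.1 h2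
    exact ⟨x, h1 (by simp), y, h1 (by simp), hxy, rfl⟩
  · rintro ⟨x, hx, y, hy, hxy, rfl⟩
    exact (pair_mem_pairs hxy).2 ⟨hx, hy⟩

/-- In `H(A | X \ A)` two points of `X` are joined iff they lie on the same side. -/
theorem pair_mem_Hgt {α : Type*} {X A : Set α} (hA : A ⊆ X) {x y : α} (h : x ≠ y) :
    ({x, y} : Set α) ∈ Hgt A (X \ A) ↔ x ∈ X ∧ y ∈ X ∧ (x ∈ A ↔ y ∈ A) := by
  have h1 := @hA x
  have h2 := @hA y
  simp only [Hgt, Set.mem_union, pair_mem_pairs h, Set.mem_sdiff]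
  tauto

theorem Hgt_subset {α : Type*} {X A : Set α} (hA : A ⊆ X) : Hgt A (X \ A) ⊆ pairs X := by
  rintro e (⟨h1, h2⟩ | ⟨h1, h2⟩)
  · exact ⟨h1.trans hA, h2⟩
  · exact ⟨h1.trans Set.sdiff_subset, h2⟩

theorem mem_pairs_triple {α : Type*} {a b c : α} (hab : a ≠ b) (hac : a ≠ c) (hbc : b ≠ c)
    {e : Set α} : e ∈ pairs ({a, b, c} : Set α) ↔ e = {a, b} ∨ e = {a, c} ∨ e = {b, c} := by
  rw [mem_pairs_iff]
  constructor
  · rintro ⟨x, hx, y, hy, hxy, rfl⟩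
    simp only [Set.mem_insert_iff, Set.mem_singleton_iff] at hx hy
    rcases hx with rfl | rfl | rfl <;> rcases hy with rfl | rfl | rfl <;>
      simp_all [Set.pair_comm]
  · rintro (rfl | rfl | rfl)
    · exact ⟨a, by simp, b, by simp, hab, rfl⟩
    · exact ⟨a, by simp, c, by simp, hac, rfl⟩
    · exact ⟨b, by simp, c, by simp, hbc, rfl⟩

theorem pair_ne {α : Type*} {a b c : α} (hab : a ≠ b) (hbc : b ≠ c) :
    ({a, b} : Set α) ≠ {a, c} := by
  intro h
  have : b ∈ ({a, c} : Set α) := h ▸ (by simp)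
  simp only [Set.mem_insert_iff, Set.mem_singleton_iff] at this
  rcases this with h | h
  · exact hab h.symm
  · exact hbc h

/-- Graph-theoretic form of the hyperplane axioms: being joined in `H` is transitive, and no
triangle avoids `H`. -/
theorem isHyperplane_iff {α : Type*} {X : Set α} {H : Set (Set α)} :
    IsHyperplane (Gdes X) H ↔ H ⊆ pairs X ∧ H ≠ pairs X ∧
      ∀ a ∈ X, ∀ b ∈ X, ∀ c ∈ X, a ≠ b → a ≠ c → b ≠ c →
        (({a, b} : Set α) ∈ H → ({a, c} : Set α) ∈ H → ({b, c} : Set α) ∈ H) ∧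
        (({a, b} : Set α) ∈ H ∨ ({a, c} : Set α) ∈ H ∨ ({b, c} : Set α) ∈ H) := by
  constructor
  · rintro ⟨⟨h1, h2⟩, h3, h4⟩
    refine ⟨h1, h3, fun a ha b hb c hc hab hac hbc => ?_⟩
    have hL : pairs ({a, b, c} : Set α) ∈ (Gdes X).lines := by
      refine ⟨{a, b, c}, ?_, Set.ncard_eq_three.2 ⟨a, b, c, hab, hac, hbc, rfl⟩, rfl⟩
      rintro x (rfl | rfl | rfl) <;> assumption
    have hm := @mem_pairs_triple α a b c hab hac hbc
    constructor
    · intro hx hy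
      exact h2 _ hL _ ⟨hm.2 (.inl rfl), hx⟩ _ ⟨hm.2 (.inr (.inl rfl)), hy⟩ (pair_ne hab hbc)
        (hm.2 (.inr (.inr rfl)))
    · obtain ⟨e, he, heH⟩ := h4 _ hL
      rcases hm.1 he with rfl | rfl | rfl <;> tauto
  · rintro ⟨h1, h3, h⟩
    refine ⟨⟨h1, ?_⟩, h3, ?_⟩
    · rintro _ ⟨Z, hZ, hZ3, rfl⟩ e ⟨he, heH⟩ f ⟨hf, hfH⟩ hef g hg
      obtain ⟨a, b, c, hab, hac, hbc, rfl⟩ := Set.ncard_eq_three.1 hZ3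
      have ha : a ∈ X := hZ (by simp)
      have hb : b ∈ X := hZ (by simp)
      have hc : c ∈ X := hZ (by simp)
      have k1 := (h a ha b hb c hc hab hac hbc).1
      have k2 := (h b hb a ha c hc hab.symm hbc hac).1
      have k3 := (h c hc a ha b hb hac.symm hbc.symm hab).1
      rw [Set.pair_comm b a] at k2
      rw [Set.pair_comm c a, Set.pair_comm c b] at k3
      rw [mem_pairs_triple hab hac hbc] at he hf hg
      rcases he with rfl | rfl | rfl <;> rcases hf with rfl | rfl | rfl <;>
        rcases hg with rfl | rfl | rfl <;> tauto
    · rintro _ ⟨Z, hZ, hZ3, rfl⟩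
      obtain ⟨a, b, c, hab, hac, hbc, rfl⟩ := Set.ncard_eq_three.1 hZ3
      have hm := @mem_pairs_triple α a b c hab hac hbc
      rcases (h a (hZ (by simp)) b (hZ (by simp)) c (hZ (by simp)) hab hac hbc).2 with k | k | k
      · exact ⟨_, hm.2 (.inl rfl), k⟩
      · exact ⟨_, hm.2 (.inr (.inl rfl)), k⟩
      · exact ⟨_, hm.2 (.inr (.inr rfl)), k⟩

theorem isHyperplane_Hgt {α : Type*} {X A : Set α} {x₀ : α} (hx₀ : x₀ ∈ X)
    (hA : A ⊆ X \ {x₀}) (hne : A.Nonempty) : IsHyperplane (Gdes X) (Hgt A (X \ A)) := by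
  have hAX : A ⊆ X := hA.trans Set.sdiff_subset
  refine isHyperplane_iff.2 ⟨Hgt_subset hAX, fun h => ?_, ?_⟩
  · obtain ⟨y, hy⟩ := hne
    have hy0 : x₀ ≠ y := fun h => (hA hy).2 h.symm
    have hm : ({x₀, y} : Set α) ∈ Hgt A (X \ A) :=
      h ▸ (pair_mem_pairs hy0).2 ⟨hx₀, hAX hy⟩
    exact (hA (((pair_mem_Hgt hAX hy0).1 hm).2.2.2 hy)).2 rfl
  · intro a ha b hb c hc hab hac hbc
    rw [pair_mem_Hgt hAX hab, pair_mem_Hgt hAX hac, pair_mem_Hgt hAX hbc]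
    tauto

/-- The set `A` consists of the points of `X` not joined to `x₀` in `H`: two points outside `A` are
joined by transitivity through `x₀`, two points of `A` because the triangle with `x₀` meets `H`. -/
theorem exists_eq_Hgt {α : Type*} {X : Set α} {x₀ : α} (hx₀ : x₀ ∈ X) {H : Set (Set α)}
    (hH : IsHyperplane (Gdes X) H) :
    ∃ A ⊆ X \ {x₀}, A.Nonempty ∧ Hgt A (X \ A) = H := by
  obtain ⟨h1, h2, h⟩ := isHyperplane_iff.1 hH
  set A : Set α := {y | y ∈ X ∧ y ≠ x₀ ∧ ({x₀, y} : Set α) ∉ H} with hAdef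
  have hA : A ⊆ X \ {x₀} := fun y hy => ⟨hy.1, hy.2.1⟩
  have hAX : A ⊆ X := hA.trans Set.sdiff_subset
  have hx₀A : x₀ ∉ A := fun h => h.2.1 rfl
  have key : ∀ y ∈ X, x₀ ≠ y → (({x₀, y} : Set α) ∈ H ↔ y ∉ A) := by
    intro y hy hne
    simp only [hAdef, Set.mem_ofPred_eq]
    have := hne.symm
    tauto
  have heq : Hgt A (X \ A) = H := by
    have aux : ∀ x ∈ X, ∀ y ∈ X, x ≠ y →
        (({x, y} : Set α) ∈ Hgt A (X \ A) ↔ ({x, y} : Set α) ∈ H) := by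
      intro x hx y hy hxy
      rw [pair_mem_Hgt hAX hxy]
      by_cases hx0 : x₀ = x
      · subst hx0
        rw [key y hy hxy]
        tauto
      by_cases hy0 : x₀ = y
      · subst hy0
        rw [Set.pair_comm, key x hx hx0]
        tauto
      have k1 := h x₀ hx₀ x hx y hy hx0 hy0 hxy
      have k2 := (h x hx x₀ hx₀ y hy (Ne.symm hx0) hxy hy0).1
      have k3 := (h y hy x₀ hx₀ x hx (Ne.symm hy0) hxy.symm hx0).1
      rw [Set.pair_comm x x₀] at k2
      rw [Set.pair_comm y x₀, Set.pair_comm y x] at k3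
      rw [key x hx hx0, key y hy hy0] at k1 k2 k3
      tauto
    ext e
    constructor
    · intro he
      obtain ⟨x, hx, y, hy, hxy, rfl⟩ := mem_pairs_iff.1 (Hgt_subset hAX he)
      exact (aux x hx y hy hxy).1 he
    · intro he
      obtain ⟨x, hx, y, hy, hxy, rfl⟩ := mem_pairs_iff.1 (h1 he)
      exact (aux x hx y hy hxy).2 he
  refine ⟨A, hA, ?_, heq⟩
  by_contra hne
  rw [Set.not_nonempty_iff_eq_empty] at hne
  refine h2 (h1.antisymm fun e he => ?_)
  rw [← heq, hne, Set.sdiff_empty]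
  exact Or.inr he

/-- `G(X,2)` with `|X| = n ≥ 3` has exactly `2^(n-1) - 1` hyperplanes. -/
theorem stmt_14 {α : Type*} (n : ℕ) (hn : 3 ≤ n) (X : Set α)
    (hXfin : X.Finite) (hXcard : X.ncard = n) :
    {H : Set (Set α) | IsHyperplane (Gdes X) H}.ncard = 2 ^ (n - 1) - 1 := by
  obtain ⟨x₀, hx₀⟩ : X.Nonempty := by
    rw [← Set.ncard_pos hXfin]
    omega
  have himg : {H : Set (Set α) | IsHyperplane (Gdes X) H} =
      (fun A => Hgt A (X \ A)) '' (𝒫 (X \ {x₀}) \ {∅}) := by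
    ext H
    constructor
    · intro hH
      obtain ⟨A, hA, hne, rfl⟩ := exists_eq_Hgt hx₀ hH
      exact ⟨A, ⟨hA, hne.ne_empty⟩, rfl⟩
    · rintro ⟨A, ⟨hA, hne⟩, rfl⟩
      exact isHyperplane_Hgt hx₀ hA (Set.nonempty_iff_ne_empty.2 hne)
  have hinj : Set.InjOn (fun A => Hgt A (X \ A)) (𝒫 (X \ {x₀}) \ {∅}) := by
    rintro A ⟨hA, -⟩ B ⟨hB, -⟩ hAB
    have hA' : A ⊆ X \ {x₀} := hA
    have hB' : B ⊆ X \ {x₀} := hB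
    have hxA : x₀ ∉ A := fun h => (hA' h).2 rfl
    have hxB : x₀ ∉ B := fun h => (hB' h).2 rfl
    ext y
    by_cases hy : y ∈ X \ {x₀}
    -- `A` is recovered from its image: `y ∈ A` iff `{x₀, y} ∉ H(A | X \ A)`.
    · have hne : x₀ ≠ y := fun h => hy.2 h.symm
      have hm : ({x₀, y} : Set α) ∈ Hgt A (X \ A) ↔ ({x₀, y} : Set α) ∈ Hgt B (X \ B) := by
        simp only at hAB
        rw [hAB]
      rw [pair_mem_Hgt (hA'.trans Set.sdiff_subset) hne,
        pair_mem_Hgt (hB'.trans Set.sdiff_subset) hne] at hm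
      have := hy.1
      tauto
    · exact ⟨fun h => (hy (hA' h)).elim, fun h => (hy (hB' h)).elim⟩
  rw [himg, hinj.ncard_image,
    Set.ncard_sdiff_singleton_of_mem (Set.empty_subset _), Set.ncard_powerset _ (hXfin.sdiff),
    Set.ncard_sdiff_singleton_of_mem hx₀, hXcard]
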